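/- arXiv:1607.07061 — 6 statements merged into one kernel-verified Lean document; each statement's English description precedes it below -/
import Mathlib

section
/- Let (X, τ₁, τ₂) be a bispace and let i, j ∈ {1,2} with i ≠ j. If A ⊆ X and there exists an (i,j)-semi preopen set U such that U ⊆ A ⊆ τⱼcl(U), then A is (i,j)-semi preopen. -/
/-- An Alexandroff space (σ-space) structure on `X`: a collection of "open" sets
containing `∅` and `X`, closed under countable unions and finite (binary) intersections. -/
structure AlexSpace (X : Type*) where
  opens : Set (Set X)
  empty_mem : ∅ ∈ opens
  univ_mem : Set.univ ∈ opens
  countable_sUnion_mem : ∀ S : Set (Set X), S.Countable → S ⊆ opens → ⋃₀ S ∈ opens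
  inter_mem : ∀ U V : Set X, U ∈ opens → V ∈ opens → U ∩ V ∈ opens

namespace AlexSpace

variable {X : Type*}

/-- A set is closed if its complement is open. -/
def IsClosed (τ : AlexSpace X) (F : Set X) : Prop := Fᶜ ∈ τ.opens

/-- The closure of `A`: the intersection of all closed sets containing `A`. -/
def cl (τ : AlexSpace X) (A : Set X) : Set X := ⋂₀ {F | τ.IsClosed F ∧ A ⊆ F}

/-- The interior of `A`: the union of all open sets contained in `A`. -/
def int (τ : AlexSpace X) (A : Set X) : Set X := ⋃₀ {U | U ∈ τ.opens ∧ U ⊆ A}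

end AlexSpace

/-- `A` is `(i,j)`-preopen w.r.t. the pair `(τi, τj)` if there is `U ∈ τi` with
`A ⊆ U ⊆ τj.cl A`. -/
def PreOpen {X : Type*} (τi τj : AlexSpace X) (A : Set X) : Prop :=
  ∃ U ∈ τi.opens, A ⊆ U ∧ U ⊆ τj.cl A

/-- `A` is `(i,j)`-semi preopen if there is an `(i,j)`-preopen `U` with `U ⊆ A ⊆ τj.cl U`. -/
def SemiPreOpen {X : Type*} (τi τj : AlexSpace X) (A : Set X) : Prop :=
  ∃ U, PreOpen τi τj U ∧ U ⊆ A ∧ A ⊆ τj.cl U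

namespace AlexSpace

variable {X : Type*} {τ : AlexSpace X} {A B F : Set X}

theorem cl_minimal (hAF : A ⊆ F) (hF : τ.IsClosed F) : τ.cl A ⊆ F :=
  Set.sInter_subset_of_mem ⟨hF, hAF⟩

-- `τ.cl B` need not be closed, since `τ` is stable only under countable unions; so `cl_minimal`
-- is applied to each closed set containing `B` instead.
theorem cl_subset_cl_of_subset_cl (hAB : A ⊆ τ.cl B) : τ.cl A ⊆ τ.cl B :=
  Set.subset_sInter fun _ ⟨hF, hBF⟩ => cl_minimal (hAB.trans (cl_minimal hBF hF)) hF

end AlexSpace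

theorem semiPreopen_of_between {X : Type*} (τ : Fin 2 → AlexSpace X) (i j : Fin 2)
    (hij : i ≠ j) (A U : Set X) (hU : SemiPreOpen (τ i) (τ j) U) (hUA : U ⊆ A)
    (hAcl : A ⊆ (τ j).cl U) :
    SemiPreOpen (τ i) (τ j) A := by
  obtain ⟨V, hV, hVU, hUV⟩ := hU
  exact ⟨V, hV, hVU.trans hUA, hAcl.trans (AlexSpace.cl_subset_cl_of_subset_cl hUV)⟩
end

section
/- Let (X, τ₁, τ₂) be a bispace and let i, j ∈ {1,2} with i ≠ j. If (A_k)_{k∈ℕ} is a countable family of (i,j)-semi preopen subsets of X, then the union ⋃_{k∈ℕ} A_k is (i,j)-semi preopen. -/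
namespace AlexSpace

variable {X : Type*} {ι : Sort*}

theorem iUnion_mem_opens [Countable ι] (τ : AlexSpace X) {U : ι → Set X}
    (hU : ∀ k, U k ∈ τ.opens) : ⋃ k, U k ∈ τ.opens :=
  τ.countable_sUnion_mem (Set.range U) (Set.countable_range U) (Set.range_subset_iff.2 hU)

theorem cl_mono (τ : AlexSpace X) {A B : Set X} (hAB : A ⊆ B) : τ.cl A ⊆ τ.cl B :=
  Set.sInter_subset_sInter fun _ hF ↦ ⟨hF.1, hAB.trans hF.2⟩

theorem iUnion_subset_cl_iUnion (τ : AlexSpace X) {A B : ι → Set X}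
    (hBA : ∀ k, B k ⊆ τ.cl (A k)) : ⋃ k, B k ⊆ τ.cl (⋃ k, A k) :=
  Set.iUnion_subset fun k ↦ (hBA k).trans (τ.cl_mono (Set.subset_iUnion A k))

end AlexSpace

section Countable

variable {X : Type*} {ι : Sort*} [Countable ι] {τi τj : AlexSpace X} {A : ι → Set X}

theorem preopen_iUnion (hA : ∀ k, PreOpen τi τj (A k)) : PreOpen τi τj (⋃ k, A k) := by
  choose U hU hAU hUA using hA
  exact ⟨⋃ k, U k, τi.iUnion_mem_opens hU, Set.iUnion_mono hAU, τj.iUnion_subset_cl_iUnion hUA⟩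

theorem semiPreopen_iUnion_general (hA : ∀ k, SemiPreOpen τi τj (A k)) :
    SemiPreOpen τi τj (⋃ k, A k) := by
  choose U hU hUA hAU using hA
  exact ⟨⋃ k, U k, preopen_iUnion hU, Set.iUnion_mono hUA, τj.iUnion_subset_cl_iUnion hAU⟩

end Countable

theorem semiPreopen_iUnion {X : Type*} (τ : Fin 2 → AlexSpace X) (i j : Fin 2) (hij : i ≠ j)
    (A : ℕ → Set X) (hA : ∀ k : ℕ, SemiPreOpen (τ i) (τ j) (A k)) :
    SemiPreOpen (τ i) (τ j) (⋃ k : ℕ, A k) :=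
  semiPreopen_iUnion_general hA
end

section
/- Let (X, τ₁, τ₂) be a bispace and let i, j ∈ {1,2} with i ≠ j. If A ⊆ X is (i,j)-preopen and B ∈ τ₁ ∩ τ₂, then A ∩ B is (i,j)-preopen. -/
namespace AlexSpace

variable {X : Type*} {τ : AlexSpace X} {A B : Set X} {x : X}

theorem mem_cl_iff : x ∈ τ.cl A ↔ ∀ U ∈ τ.opens, x ∈ U → (U ∩ A).Nonempty := by
  constructor
  · intro hx U hU hxU
    by_contra hdisj
    have hA : A ⊆ Uᶜ := fun y hyA hyU => hdisj ⟨y, hyU, hyA⟩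
    have hUc : τ.IsClosed Uᶜ := by rwa [AlexSpace.IsClosed, compl_compl]
    exact hx Uᶜ ⟨hUc, hA⟩ hxU
  · rintro hx F ⟨hF, hAF⟩
    by_contra hxF
    obtain ⟨y, hyF, hyA⟩ := hx Fᶜ hF hxF
    exact hyF (hAF hyA)

theorem cl_inter_subset (hB : B ∈ τ.opens) : τ.cl A ∩ B ⊆ τ.cl (A ∩ B) := by
  rintro x ⟨hxA, hxB⟩
  refine mem_cl_iff.mpr fun U hU hxU => ?_
  obtain ⟨y, ⟨hyU, hyB⟩, hyA⟩ := mem_cl_iff.mp hxA (U ∩ B) (τ.inter_mem U B hU hB) ⟨hxU, hxB⟩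
  exact ⟨y, hyU, hyA, hyB⟩

end AlexSpace

theorem preopen_inter_biopen_general {X : Type*} {σ τ : AlexSpace X} {A B : Set X}
    (hA : PreOpen σ τ A) (hBσ : B ∈ σ.opens) (hBτ : B ∈ τ.opens) : PreOpen σ τ (A ∩ B) := by
  obtain ⟨U, hU, hAU, hUA⟩ := hA
  refine ⟨U ∩ B, σ.inter_mem U B hU hBσ, Set.inter_subset_inter_left B hAU, ?_⟩
  calc U ∩ B ⊆ τ.cl A ∩ B := Set.inter_subset_inter_left B hUA
    _ ⊆ τ.cl (A ∩ B) := AlexSpace.cl_inter_subset hBτ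

theorem preopen_inter_biopen {X : Type*} (τ : Fin 2 → AlexSpace X) (i j : Fin 2)
    (hij : i ≠ j) (A B : Set X) (hA : PreOpen (τ i) (τ j) A)
    (hBi : B ∈ (τ i).opens) (hBj : B ∈ (τ j).opens) :
    PreOpen (τ i) (τ j) (A ∩ B) :=
  preopen_inter_biopen_general hA hBi hBj
end

section
/- Let (X, τ₁, τ₂) be a bispace, let i, j ∈ {1,2} with i ≠ j, and let A ⊆ Y ⊆ X. If A is (τᵢ, τⱼ)-preopen in X, then A is (τ_{i/Y}, τ_{j/Y})-preopen in the subbispace (Y, τ_{1/Y}, τ_{2/Y}), i.e., there exists a set W ∈ τ_{i/Y} with A ⊆ W ⊆ (closure of A in the trace structure τ_{j/Y} on Y). -/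
/-- The trace (subspace) family on `Y`: sets of the form `U ∩ Y` with `U` open. -/
def traceOpens {X : Type*} (τ : AlexSpace X) (Y : Set X) : Set (Set X) :=
  {V | ∃ U ∈ τ.opens, V = U ∩ Y}

/-- The closure of `A ⊆ Y` in the trace structure on `Y`: the intersection of all
subsets of `Y` containing `A` whose complement in `Y` belongs to the trace family. -/
def traceCl {X : Type*} (τ : AlexSpace X) (Y A : Set X) : Set X :=
  ⋂₀ {F | A ⊆ F ∧ F ⊆ Y ∧ Y \ F ∈ traceOpens τ Y}

/-- `A ⊆ Y` is preopen in the subbispace structure on `Y` w.r.t. `(τi, τj)`: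
there is `W` in the trace family of `τi` with `A ⊆ W ⊆` trace-closure of `A` w.r.t. `τj`. -/
def TracePreOpen {X : Type*} (τi τj : AlexSpace X) (Y A : Set X) : Prop :=
  ∃ W ∈ traceOpens τi Y, A ⊆ W ∧ W ⊆ traceCl τj Y A

section Trace

variable {X : Type*} (τ : AlexSpace X) {Y A F : Set X}

theorem AlexSpace.isClosed_univ : τ.IsClosed Set.univ := by
  simpa only [AlexSpace.IsClosed, Set.compl_univ] using τ.empty_mem

theorem diff_mem_traceOpens_iff (hFY : F ⊆ Y) :
    Y \ F ∈ traceOpens τ Y ↔ ∃ C, τ.IsClosed C ∧ F = C ∩ Y := by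
  constructor
  · rintro ⟨U, hU, hYF⟩
    refine ⟨Uᶜ, by rwa [AlexSpace.IsClosed, compl_compl], ?_⟩
    calc
      F = Y \ (Y \ F) := (Set.sdiff_sdiff_cancel_left hFY).symm
      _ = Y \ (U ∩ Y) := by rw [hYF]
      _ = Uᶜ ∩ Y := by rw [Set.sdiff_inter_self_eq_sdiff, Set.sdiff_eq, Set.inter_comm]
  · rintro ⟨C, hC, rfl⟩
    refine ⟨Cᶜ, hC, ?_⟩
    rw [Set.sdiff_inter_self_eq_sdiff, Set.sdiff_eq, Set.inter_comm]

theorem traceCl_eq_cl_inter (hAY : A ⊆ Y) : traceCl τ Y A = τ.cl A ∩ Y := by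
  apply Set.Subset.antisymm
  · have traceCl_subset {C : Set X} (hC : τ.IsClosed C) (hAC : A ⊆ C) :
        traceCl τ Y A ⊆ C ∩ Y :=
      Set.sInter_subset_of_mem ⟨Set.subset_inter hAC hAY, Set.inter_subset_right,
        (diff_mem_traceOpens_iff τ Set.inter_subset_right).2 ⟨C, hC, rfl⟩⟩
    refine Set.subset_inter (Set.subset_sInter fun C hC => ?_) ?_
    · exact (traceCl_subset hC.1 hC.2).trans Set.inter_subset_left
    · exact (traceCl_subset τ.isClosed_univ A.subset_univ).trans Set.inter_subset_right
  · refine Set.subset_sInter fun F ⟨hAF, hFY, hF⟩ => ?_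
    obtain ⟨C, hC, rfl⟩ := (diff_mem_traceOpens_iff τ hFY).1 hF
    have hcl : τ.cl A ⊆ C := Set.sInter_subset_of_mem ⟨hC, hAF.trans Set.inter_subset_left⟩
    exact Set.inter_subset_inter_left Y hcl

end Trace

theorem preopen_of_subspace {X : Type*} (τ : Fin 2 → AlexSpace X) (i j : Fin 2)
    (hij : i ≠ j) (Y A : Set X) (hAY : A ⊆ Y) (hA : PreOpen (τ i) (τ j) A) :
    TracePreOpen (τ i) (τ j) Y A := by
  obtain ⟨U, hU, hAU, hUcl⟩ := hA
  refine ⟨U ∩ Y, ⟨U, hU, rfl⟩, Set.subset_inter hAU hAY, ?_⟩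
  rw [traceCl_eq_cl_inter (τ j) hAY]
  exact Set.inter_subset_inter_left Y hUcl
end

section
/- Let f : (X, τ₁, τ₂) → (Y, σ₁, σ₂) be a pairwise precontinuous function between bispaces and let i, j ∈ {1,2} with i ≠ j. Then for every subset A of X, f((i,j)pcl(A)) ⊆ σᵢcl(f(A)). -/
/-- The `(i,j)`-preclosure of `A`: the intersection of all `(i,j)`-preclosed sets
(i.e. sets whose complement is `(i,j)`-preopen) containing `A`. -/
def pcl {X : Type*} (τi τj : AlexSpace X) (A : Set X) : Set X :=
  ⋂₀ {F | PreOpen τi τj Fᶜ ∧ A ⊆ F}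

/-- `f` is pairwise precontinuous: for all `i ≠ j`, the preimage of every
`σ i`-open set is `(i,j)`-preopen in `X`. -/
def PairwisePreCont {X Y : Type*} (τ : Fin 2 → AlexSpace X) (σ : Fin 2 → AlexSpace Y)
    (f : X → Y) : Prop :=
  ∀ i j : Fin 2, i ≠ j → ∀ V ∈ (σ i).opens, PreOpen (τ i) (τ j) (f ⁻¹' V)

theorem AlexSpace.subset_cl_iff {X : Type*} {τ : AlexSpace X} {A B : Set X} :
    B ⊆ τ.cl A ↔ ∀ F, τ.IsClosed F → A ⊆ F → B ⊆ F :=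
  Set.subset_sInter_iff.trans <| forall_congr' fun _ => and_imp

theorem pcl_subset_of_preOpen_compl {X : Type*} {τi τj : AlexSpace X} {A F : Set X}
    (hF : PreOpen τi τj Fᶜ) (hAF : A ⊆ F) : pcl τi τj A ⊆ F :=
  Set.sInter_subset_of_mem ⟨hF, hAF⟩

theorem image_pcl_subset_cl_image_general {X Y : Type*} {τi τj : AlexSpace X}
    {σ : AlexSpace Y} {f : X → Y} (hf : ∀ V ∈ σ.opens, PreOpen τi τj (f ⁻¹' V)) (A : Set X) :
    f '' pcl τi τj A ⊆ σ.cl (f '' A) := by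
  -- In a σ-space a closure need not be closed, so `hf` cannot be applied to `(σ.cl (f '' A))ᶜ`:
  -- the closed sets containing `f '' A` are pulled back one at a time.
  refine AlexSpace.subset_cl_iff.mpr fun F hF hAF => ?_
  have preOpen_compl : PreOpen τi τj (f ⁻¹' F)ᶜ := hf Fᶜ hF
  have subset_preimage : A ⊆ f ⁻¹' F := Set.image_subset_iff.mp hAF
  exact Set.image_subset_iff.mpr (pcl_subset_of_preOpen_compl preOpen_compl subset_preimage)

theorem image_pcl_subset_cl_image {X Y : Type*} (τ : Fin 2 → AlexSpace X)
    (σ : Fin 2 → AlexSpace Y) (f : X → Y) (hf : PairwisePreCont τ σ f)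
    (i j : Fin 2) (hij : i ≠ j) (A : Set X) :
    f '' pcl (τ i) (τ j) A ⊆ (σ i).cl (f '' A) :=
  image_pcl_subset_cl_image_general (hf i j hij) A
end

section
/- Let f : (X, τ₁, τ₂) → (X*, τ₁*, τ₂*) be a function between bispaces, let i, j ∈ {1,2} with i ≠ j, and suppose f is (i,j)-precontinuous, i.e., f⁻¹(U*) is (i,j)-preopen in X for every U* ∈ τᵢ*. Assume further that f(τⱼcl(f⁻¹(U*))) = U* for every U* ∈ τᵢ*. If D is a directed set and (x_α)_{α∈D} is a net converging to x in (X, τᵢ) (i.e., for every U ∈ τᵢ containing x there exists α₀ ∈ D with x_α ∈ U for all α ≥ α₀), then the net (f(x_α))_{α∈D} converges to f(x) in (X*, τᵢ*). -/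
theorem PreOpen.mem_opens_of_cl_subset {X : Type*} {τi τj : AlexSpace X} {A : Set X}
    (hA : PreOpen τi τj A) (hcl : τj.cl A ⊆ A) : A ∈ τi.opens := by
  obtain ⟨U, hU, hAU, hUcl⟩ := hA
  have hA_eq : A = U := hAU.antisymm (hUcl.trans hcl)
  rwa [hA_eq]

theorem PreOpen.preimage_mem_opens_of_image_cl_subset {X Y : Type*} {τi τj : AlexSpace X}
    {f : X → Y} {V : Set Y} (hV : PreOpen τi τj (f ⁻¹' V)) (hcl : f '' τj.cl (f ⁻¹' V) ⊆ V) :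
    f ⁻¹' V ∈ τi.opens :=
  hV.mem_opens_of_cl_subset (Set.image_subset_iff.mp hcl)

theorem net_image_converges_general {X Y ι : Type*} {τi τj : AlexSpace X} {σ : AlexSpace Y}
    {f : X → Y} (hf : ∀ V ∈ σ.opens, PreOpen τi τj (f ⁻¹' V))
    (hcl : ∀ V ∈ σ.opens, f '' τj.cl (f ⁻¹' V) ⊆ V)
    {l : Filter ι} {x : ι → X} {p : X}
    (hx : ∀ U ∈ τi.opens, p ∈ U → ∀ᶠ α in l, x α ∈ U) :
    ∀ V ∈ σ.opens, f p ∈ V → ∀ᶠ α in l, f (x α) ∈ V := by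
  intro V hV hpV
  have hV_preimage : f ⁻¹' V ∈ τi.opens :=
    (hf V hV).preimage_mem_opens_of_image_cl_subset (hcl V hV)
  exact hx (f ⁻¹' V) hV_preimage hpV

theorem net_image_converges {X Xs : Type*} (τ : Fin 2 → AlexSpace X)
    (τs : Fin 2 → AlexSpace Xs) (i j : Fin 2) (hij : i ≠ j) (f : X → Xs)
    (hf : ∀ Us ∈ (τs i).opens, PreOpen (τ i) (τ j) (f ⁻¹' Us))
    (hC : ∀ Us ∈ (τs i).opens, f '' ((τ j).cl (f ⁻¹' Us)) = Us)
    {D : Type*} [Preorder D] [Nonempty D] [IsDirected D (· ≤ ·)]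
    (x : D → X) (p : X)
    (hconv : ∀ U ∈ (τ i).opens, p ∈ U → ∃ α₀ : D, ∀ α : D, α₀ ≤ α → x α ∈ U) :
    ∀ Us ∈ (τs i).opens, f p ∈ Us → ∃ α₀ : D, ∀ α : D, α₀ ≤ α → f (x α) ∈ Us := by
  simp_rw [← ge_iff_le, ← Filter.eventually_atTop] at hconv ⊢
  exact net_image_converges_general hf (fun Us hUs => (hC Us hUs).subset) hconv
end
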